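/- arXiv:2507.06115 — 2 statements merged into one kernel-verified Lean document; each statement's English description precedes it below -/
import Mathlib

section
/- Let r > 0 with r ≠ 1, set p_r := 2r / log₂(2 + 2^r), and define H_r(x, y) := 1 + (x + y)^r + (xy)^r − ((1 + x^{p_r})(1 + y^{p_r}))^{r/p_r} for x, y ≥ 0. If r > 1 then H_r(x, y) ≤ H_r(√(xy), √(xy)) for all x, y ≥ 0; and if r < 1 then H_r(x, y) ≥ H_r(√(xy), √(xy)) for all x, y ≥ 0. -/
/-- The function `H_r(x,y) = 1 + (x+y)^r + (xy)^r - ((1+x^{p_r})(1+y^{p_r}))^{r/p_r}`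
with `p_r = 2r / log₂(2 + 2^r)`. -/
noncomputable def Hfun (r : ℝ) (x y : ℝ) : ℝ :=
  1 + (x + y) ^ r + (x * y) ^ r -
    ((1 + x ^ (2 * r / Real.logb 2 (2 + 2 ^ r))) *
      (1 + y ^ (2 * r / Real.logb 2 (2 + 2 ^ r)))) ^
        (r / (2 * r / Real.logb 2 (2 + 2 ^ r)))

/-!
Write `p = p_r`. For positive `x = exp (u + t)` and `y = exp (u - t)`, the geometric mean is `exp u`
and, up to the factor `exp u ^ r`, the value `H_r(x, y)` exceeds the one on the diagonal by
`(2 cosh t) ^ r - 2 ^ r + (2 + A) ^ (r / p) - (A + B) ^ (r / p)`, with `A = 2 cosh (p u)` and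
`B = 2 cosh (p t)`. The exponent `p` is chosen so that `4 ^ (r / p) = 2 + 2 ^ r`. Since `2 + A` and
`2 + B` lie between `4` and `A + B` and have the same sum as these endpoints, convexity (`r ≥ 1`) or
concavity (`r ≤ 1`) of `z ↦ z ^ (r / p)` leaves only the comparison of `2 + (2 cosh t) ^ r` with
`(2 + 2 cosh (p t)) ^ (r / p)`.

The difference of the logarithms of these two functions vanishes at `t = 0` and as `t → ∞`, so it
has constant sign on `[0, ∞)` once its derivative is known to change sign at most once. That
derivative has the sign of `artanh s(t) - p t / 2`, where `s` is `1 / r` times the derivative of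
`log (2 + (2 cosh t) ^ r)`. This expression vanishes at `0`, and its own derivative has the sign of
a monotone function of `cosh t`, so it changes sign at most once.
-/

open Real Set Filter Topology

section SignOfDerivative

-- In the order on `Prop`, `MonotoneOn (fun t ↦ 0 ≤ f' t)` says that `f'` stays nonnegative once it
-- is nonnegative.

variable {f f' : ℝ → ℝ} {a : ℝ}

theorem monotoneOn_Ici_of_monotoneOn_deriv_nonneg (hf : ContinuousOn f (Ici a))
    (hf' : ∀ t ∈ Ioi a, HasDerivAt f (f' t) t) (hmono : MonotoneOn (fun t ↦ 0 ≤ f' t) (Ioi a))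
    {s : ℝ} (hs : a < s) (hfs : f a ≤ f s) : MonotoneOn f (Ici s) := by
  obtain ⟨c, hc, hslope⟩ := exists_hasDerivAt_eq_slope f f' hs (hf.mono Icc_subset_Ici_self)
    fun t ht ↦ hf' t ht.1
  have hc_nonneg : 0 ≤ f' c := by
    rw [hslope]
    exact div_nonneg (sub_nonneg.2 hfs) (sub_nonneg.2 hs.le)
  have hderiv (t : ℝ) (ht : s < t) : HasDerivAt f (f' t) t := hf' t (hs.trans ht)
  refine monotoneOn_of_hasDerivWithinAt_nonneg (f' := f') (convex_Ici s)
    (hf.mono (Ici_subset_Ici.2 hs.le)) ?_ ?_ <;> rw [interior_Ici]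
  · exact fun t ht ↦ (hderiv t ht).hasDerivWithinAt
  · exact fun t ht ↦ hmono hc.1 (hs.trans ht) (hc.2.trans ht).le hc_nonneg

theorem monotoneOn_le_of_monotoneOn_deriv_nonneg (hf : ContinuousOn f (Ici a))
    (hf' : ∀ t ∈ Ioi a, HasDerivAt f (f' t) t) (hmono : MonotoneOn (fun t ↦ 0 ≤ f' t) (Ioi a)) :
    MonotoneOn (fun t ↦ f a ≤ f t) (Ioi a) := fun _ hs _ _ hst hfs ↦
  hfs.trans <| monotoneOn_Ici_of_monotoneOn_deriv_nonneg hf hf' hmono hs hfs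
    self_mem_Ici hst hst

theorem le_of_tendsto_of_monotoneOn_deriv_nonneg (hf : ContinuousOn f (Ici a))
    (hf' : ∀ t ∈ Ioi a, HasDerivAt f (f' t) t) (hmono : MonotoneOn (fun t ↦ 0 ≤ f' t) (Ioi a))
    (hlim : Tendsto f atTop (𝓝 (f a))) {t : ℝ} (ht : a ≤ t) : f t ≤ f a := by
  by_contra! hlt
  have hat : a < t := ht.lt_of_ne (by rintro rfl; exact hlt.false)
  have hmono_t := monotoneOn_Ici_of_monotoneOn_deriv_nonneg hf hf' hmono hat hlt.le
  refine hlt.not_ge (ge_of_tendsto hlim ?_)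
  filter_upwards [eventually_ge_atTop t] with u hu using hmono_t self_mem_Ici hu hu

end SignOfDerivative

section Artanh

theorem hasDerivAt_artanh {x : ℝ} (hx : x ∈ Ioo (-1) 1) :
    HasDerivAt artanh (1 - x ^ 2)⁻¹ x := by
  have hadd : 0 < 1 + x := by linarith [hx.1]
  have hsub : 0 < 1 - x := by linarith [hx.2]
  have hlog : HasDerivAt (fun y ↦ 1 / 2 * (log (1 + y) - log (1 - y)))
      (1 / 2 * (1 / (1 + x) - -1 / (1 - x))) x :=
    ((((hasDerivAt_id x).const_add 1).log hadd.ne').sub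
      (((hasDerivAt_id x).const_sub 1).log hsub.ne')).const_mul _
  have hderiv : 1 / 2 * (1 / (1 + x) - -1 / (1 - x)) = (1 - x ^ 2)⁻¹ := by
    rw [show 1 - x ^ 2 = (1 + x) * (1 - x) by ring]
    field_simp
    ring
  rw [← hderiv]
  refine hlog.congr_of_eventuallyEq ?_
  filter_upwards [isOpen_Ioo.mem_nhds hx] with y hy
  rw [artanh_eq_half_log (Ioo_subset_Icc_self hy),
    log_div (by linarith [hy.1]) (by linarith [hy.2])]

theorem sign_sub_tanh {x : ℝ} (hx : x ∈ Ioo (-1) 1) (y : ℝ) :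
    SignType.sign (x - tanh y) = SignType.sign (artanh x - y) := by
  have hy : tanh y ∈ Ioo (-1) 1 := ⟨neg_one_lt_tanh y, tanh_lt_one y⟩
  rcases lt_trichotomy x (tanh y) with hlt | rfl | hgt
  · have := strictMonoOn_artanh hx hy hlt
    rw [artanh_tanh] at this
    rw [sign_neg (sub_neg.2 hlt), sign_neg (sub_neg.2 this)]
  · rw [artanh_tanh, sub_self, sub_self]
  · have := strictMonoOn_artanh hy hx hgt
    rw [artanh_tanh] at this
    rw [sign_pos (sub_pos.2 hgt), sign_pos (sub_pos.2 this)]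

theorem sinh_div_one_add_cosh (x : ℝ) : sinh x / (1 + cosh x) = tanh (x / 2) := by
  have hsinh : sinh x = 2 * sinh (x / 2) * cosh (x / 2) := by
    rw [← sinh_two_mul, mul_div_cancel₀ x two_ne_zero]
  have hcosh : 1 + cosh x = 2 * cosh (x / 2) ^ 2 := by
    have := cosh_two_mul (x / 2)
    rw [mul_div_cancel₀ x two_ne_zero] at this
    linarith [cosh_sq' (x / 2)]
  have := cosh_pos (x / 2)
  rw [hsinh, hcosh, tanh_eq_sinh_div_cosh]
  field_simp

end Artanh

/-- The function `log (2 + (2 cosh t) ^ r)`. Taken at `t` for the parameter `r`, and at `p t` for the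
parameter `1` with the factor `r / p`, it gives the logarithms of the two functions compared. -/
noncomputable def coshPotential (r t : ℝ) : ℝ :=
  log (2 + (2 * cosh t) ^ r)

/-- The derivative of `coshPotential r` divided by `r`, with a factor `2` cancelled. It takes values
in `(-1, 1)`, so that `artanh` can be applied to it. -/
noncomputable def coshSlope (r t : ℝ) : ℝ :=
  (2 * cosh t) ^ (r - 1) * sinh t / (1 + (2 * cosh t) ^ (r - 1) * cosh t)

theorem two_mul_cosh_pos (t : ℝ) : 0 < 2 * cosh t := by positivity

theorem hasDerivAt_two_mul_cosh_rpow (r t : ℝ) :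
    HasDerivAt (fun t ↦ (2 * cosh t) ^ r) (r * (2 * cosh t) ^ (r - 1) * (2 * sinh t)) t := by
  convert ((hasDerivAt_cosh t).const_mul 2).rpow_const (p := r) (Or.inl (by positivity)) using 1
  ring

theorem hasDerivAt_coshPotential (r t : ℝ) :
    HasDerivAt (coshPotential r) (r * coshSlope r t) t := by
  have hsplit : (2 * cosh t) ^ r = (2 * cosh t) ^ (r - 1) * (2 * cosh t) := by
    rw [rpow_sub_one (by positivity), div_mul_cancel₀ _ (by positivity)]
  refine (((hasDerivAt_two_mul_cosh_rpow r t).const_add 2).log (by positivity)).congr_deriv ?_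
  rw [hsplit, coshSlope]
  field_simp

theorem coshSlope_mem_Ioo (r t : ℝ) : coshSlope r t ∈ Ioo (-1) 1 := by
  have hN : 0 < (2 * cosh t) ^ (r - 1) := by positivity
  rw [coshSlope, mem_Ioo, lt_div_iff₀ (by positivity), div_lt_iff₀ (by positivity)]
  have hadd : 0 < sinh t + cosh t := by rw [sinh_add_cosh]; positivity
  have hsub : 0 < cosh t - sinh t := by rw [cosh_sub_sinh]; positivity
  constructor <;> nlinarith [mul_pos hN hadd, mul_pos hN hsub]

theorem hasDerivAt_coshSlope (r t : ℝ) :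
    HasDerivAt (coshSlope r)
      ((2 * cosh t) ^ (r - 1) * (r * cosh t - (r - 1) / cosh t + (2 * cosh t) ^ (r - 1)) /
        (1 + (2 * cosh t) ^ (r - 1) * cosh t) ^ 2) t := by
  have hpow : HasDerivAt (fun t ↦ (2 * cosh t) ^ (r - 1))
      ((r - 1) * ((2 * cosh t) ^ (r - 1) / (2 * cosh t)) * (2 * sinh t)) t := by
    rw [← rpow_sub_one (by positivity)]
    exact hasDerivAt_two_mul_cosh_rpow (r - 1) t
  refine ((hpow.fun_mul (hasDerivAt_sinh t)).fun_div
    ((hpow.fun_mul (hasDerivAt_cosh t)).const_add 1) (by positivity)).congr_deriv ?_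
  have hN : 0 < (2 * cosh t) ^ (r - 1) := by positivity
  generalize (2 * cosh t) ^ (r - 1) = N at *
  field_simp
  linear_combination (N * cosh t - r + 1) * cosh_sq t

theorem one_sub_coshSlope_sq (r t : ℝ) :
    1 - coshSlope r t ^ 2 =
      (1 + 2 * (2 * cosh t) ^ (r - 1) * cosh t + ((2 * cosh t) ^ (r - 1)) ^ 2) /
        (1 + (2 * cosh t) ^ (r - 1) * cosh t) ^ 2 := by
  have : 0 < 1 + (2 * cosh t) ^ (r - 1) * cosh t := by positivity
  rw [coshSlope, eq_div_iff (by positivity), sub_mul, div_pow, div_mul_cancel₀ _ (by positivity)]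
  linear_combination ((2 * cosh t) ^ (r - 1)) ^ 2 * cosh_sq t

theorem hasDerivAt_artanh_coshSlope (r t : ℝ) :
    HasDerivAt (fun t ↦ artanh (coshSlope r t))
      ((2 * cosh t) ^ (r - 1) * (r * cosh t - (r - 1) / cosh t + (2 * cosh t) ^ (r - 1)) /
        (1 + 2 * (2 * cosh t) ^ (r - 1) * cosh t + ((2 * cosh t) ^ (r - 1)) ^ 2)) t := by
  refine ((hasDerivAt_artanh (coshSlope_mem_Ioo r t)).comp t
    (hasDerivAt_coshSlope r t)).congr_deriv ?_
  rw [one_sub_coshSlope_sq, inv_div, div_mul_div_cancel₀' (by positivity)]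

theorem tendsto_coshPotential_sub_mul {r : ℝ} (hr : 0 < r) :
    Tendsto (fun t ↦ coshPotential r t - r * t) atTop (𝓝 0) := by
  have hexp {c : ℝ} (hc : 0 < c) : Tendsto (fun t ↦ exp (-(c * t))) atTop (𝓝 0) :=
    tendsto_exp_neg_atTop_nhds_zero.comp (tendsto_id.const_mul_atTop hc)
  have hfactor (t : ℝ) : coshPotential r t - r * t =
      log (2 * exp (-(r * t)) + (1 + exp (-(2 * t))) ^ r) := by
    have hcosh : 2 * cosh t = exp t * (1 + exp (-(2 * t))) := by
      rw [cosh_eq, mul_add, ← exp_add]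
      ring_nf
    have : 2 + (2 * cosh t) ^ r =
        (2 * exp (-(r * t)) + (1 + exp (-(2 * t))) ^ r) * exp (r * t) := by
      rw [hcosh, mul_rpow (by positivity) (by positivity), ← exp_mul, mul_comm t r, add_mul,
        mul_assoc, ← exp_add, neg_add_cancel, exp_zero]
      ring
    rw [coshPotential, this, log_mul (by positivity) (by positivity), log_exp, add_sub_cancel_right]
  have hlim := ((hexp hr).const_mul 2).add
    (((hexp two_pos).const_add 1).rpow_const (p := r) (Or.inl (by norm_num)))
  simpa only [hfactor, mul_zero, add_zero, one_rpow, zero_add, log_one]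
    using hlim.log (by norm_num)

/-- The logarithm of the quotient of `2 + (2 cosh t) ^ r` by `(2 + 2 cosh (p t)) ^ (r / p)`. -/
noncomputable def coshGap (r p t : ℝ) : ℝ :=
  coshPotential r t - r / p * coshPotential 1 (p * t)

theorem coshSlope_one (t : ℝ) : coshSlope 1 t = tanh (t / 2) := by
  rw [← sinh_div_one_add_cosh, coshSlope, sub_self, rpow_zero, one_mul, one_mul]

theorem hasDerivAt_coshGap (r : ℝ) {p : ℝ} (hp : p ≠ 0) (t : ℝ) :
    HasDerivAt (coshGap r p) (r * (coshSlope r t - tanh (p * t / 2))) t := by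
  have hinner : HasDerivAt (fun t ↦ coshPotential 1 (p * t)) (tanh (p * t / 2) * p) t := by
    refine ((hasDerivAt_coshPotential 1 (p * t)).comp t (hasDerivAt_const_mul p)).congr_deriv ?_
    rw [one_mul, coshSlope_one]
  refine ((hasDerivAt_coshPotential r t).sub (hinner.const_mul (r / p))).congr_deriv ?_
  field_simp

theorem tendsto_coshGap {r p : ℝ} (hr : 0 < r) (hp : 0 < p) :
    Tendsto (coshGap r p) atTop (𝓝 0) := by
  have hinner : Tendsto (fun t ↦ coshPotential 1 (p * t) - 1 * (p * t)) atTop (𝓝 0) :=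
    (tendsto_coshPotential_sub_mul one_pos).comp (tendsto_id.const_mul_atTop hp)
  have hlim := (tendsto_coshPotential_sub_mul hr).sub (hinner.const_mul (r / p))
  rw [mul_zero, sub_zero] at hlim
  refine hlim.congr fun t ↦ ?_
  rw [coshGap]
  field_simp
  ring

/-- The combination of real powers of `D = 2 cosh t` that gives the sign of the derivative of
`artanh (coshSlope r t) - p t / 2`. -/
noncomputable def gapSignomial (r p D : ℝ) : ℝ :=
  (2 - p) * D ^ (r - 1) + (r - p) * D - 4 * (r - 1) * D⁻¹ - p * D ^ (1 - r)

theorem monotoneOn_gapSignomial {r p : ℝ} (hr : 1 ≤ r) (hp0 : 0 ≤ p) (hp2 : p ≤ 2) (hpr : p ≤ r) :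
    MonotoneOn (gapSignomial r p) (Ioi 0) := by
  intro D (hD : 0 < D) E _ hDE
  unfold gapSignomial
  gcongr ?_ * ?_ + ?_ * ?_ - ?_ * ?_ - ?_ * ?_
  · exact rpow_le_rpow hD.le hDE (by linarith)
  · exact inv_anti₀ hD hDE
  · exact rpow_le_rpow_of_nonpos hD hDE (by linarith)

theorem antitoneOn_gapSignomial {r p : ℝ} (hr : r ≤ 1) (hp0 : 0 ≤ p) (hp2 : p ≤ 2) (hpr : r ≤ p) :
    AntitoneOn (gapSignomial r p) (Ioi 0) := by
  intro D (hD : 0 < D) E _ hDE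
  have hpow : E ^ (r - 1) ≤ D ^ (r - 1) := rpow_le_rpow_of_nonpos hD hDE (by linarith)
  have hpow' : D ^ (1 - r) ≤ E ^ (1 - r) := rpow_le_rpow hD.le hDE (by linarith)
  have hinv : E⁻¹ ≤ D⁻¹ := inv_anti₀ hD hDE
  unfold gapSignomial
  have := mul_le_mul_of_nonneg_left hpow (sub_nonneg.2 hp2)
  have := mul_le_mul_of_nonneg_left hpow' hp0
  have := mul_le_mul_of_nonneg_left hDE (sub_nonneg.2 hpr)
  have := mul_le_mul_of_nonneg_left hinv (sub_nonneg.2 hr)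
  linarith

theorem hasDerivAt_artanh_coshSlope_sub (r p t : ℝ) :
    HasDerivAt (fun t ↦ artanh (coshSlope r t) - p * t / 2)
      ((2 * cosh t) ^ (r - 1) /
          (2 * (1 + 2 * (2 * cosh t) ^ (r - 1) * cosh t + ((2 * cosh t) ^ (r - 1)) ^ 2)) *
        gapSignomial r p (2 * cosh t)) t := by
  have hlin : HasDerivAt (fun t ↦ p * t / 2) (p / 2) t := (hasDerivAt_const_mul p).div_const 2
  refine ((hasDerivAt_artanh_coshSlope r t).sub hlin).congr_deriv ?_
  have hinv : (2 * cosh t) ^ (1 - r) = ((2 * cosh t) ^ (r - 1))⁻¹ := by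
    rw [← rpow_neg (by positivity), neg_sub]
  have hN : 0 < (2 * cosh t) ^ (r - 1) := by positivity
  rw [gapSignomial, hinv]
  generalize (2 * cosh t) ^ (r - 1) = N at *
  field_simp
  ring

theorem monotoneOn_nonneg_mul_artanh_coshSlope_sub {r p σ : ℝ}
    (hσ : MonotoneOn (fun D ↦ 0 ≤ σ * gapSignomial r p D) (Ioi 0)) :
    MonotoneOn (fun t ↦ 0 ≤ σ * (artanh (coshSlope r t) - p * t / 2)) (Ioi 0) := by
  have hderiv (t : ℝ) := (hasDerivAt_artanh_coshSlope_sub r p t).const_mul σ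
  have hsign (t : ℝ) : 0 ≤ σ * ((2 * cosh t) ^ (r - 1) /
      (2 * (1 + 2 * (2 * cosh t) ^ (r - 1) * cosh t + ((2 * cosh t) ^ (r - 1)) ^ 2)) *
        gapSignomial r p (2 * cosh t)) ↔ 0 ≤ σ * gapSignomial r p (2 * cosh t) := by
    rw [mul_left_comm, mul_nonneg_iff_of_pos_left (by positivity)]
  have hderiv_mono : MonotoneOn (fun t ↦ 0 ≤ σ * gapSignomial r p (2 * cosh t)) (Ioi 0) := by
    intro s (hs : 0 < s) t (ht : 0 < t) hst
    have hcosh : cosh s ≤ cosh t := cosh_strictMonoOn.monotoneOn hs.le ht.le hst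
    exact hσ (two_mul_cosh_pos s) (two_mul_cosh_pos t) (by linarith)
  have := monotoneOn_le_of_monotoneOn_deriv_nonneg
    (fun t _ ↦ (hderiv t).continuousAt.continuousWithinAt) (fun t _ ↦ hderiv t)
    (by simpa only [hsign] using hderiv_mono)
  simpa [coshSlope] using this

-- The scalar `σ` is `1` for `r ≥ 1` and `-1` for `r ≤ 1`, which treats both regimes at once.
theorem mul_coshGap_nonpos {r p σ : ℝ} (hr : 0 < r) (hp : 0 < p) (hzero : coshGap r p 0 = 0)
    (hσ : MonotoneOn (fun D ↦ 0 ≤ σ * gapSignomial r p D) (Ioi 0)) {t : ℝ} (ht : 0 ≤ t) :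
    σ * coshGap r p t ≤ 0 := by
  have hderiv (t : ℝ) := (hasDerivAt_coshGap r hp.ne' t).const_mul σ
  have hsign (t : ℝ) : 0 ≤ σ * (r * (coshSlope r t - tanh (p * t / 2))) ↔
      0 ≤ σ * (artanh (coshSlope r t) - p * t / 2) := by
    rw [mul_left_comm, mul_nonneg_iff_of_pos_left hr, ← sign_nonneg_iff, sign_mul,
      sign_sub_tanh (coshSlope_mem_Ioo r t), ← sign_mul, sign_nonneg_iff]
  have hlim : Tendsto (fun t ↦ σ * coshGap r p t) atTop (𝓝 (σ * coshGap r p 0)) := by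
    simpa only [hzero] using (tendsto_coshGap hr hp).const_mul σ
  have := le_of_tendsto_of_monotoneOn_deriv_nonneg
    (fun t _ ↦ (hderiv t).continuousAt.continuousWithinAt) (fun t _ ↦ hderiv t)
    (by simpa only [hsign] using monotoneOn_nonneg_mul_artanh_coshSlope_sub hσ) hlim ht
  simpa only [hzero, mul_zero] using this

/-- The exponent `p_r = 2r / log₂ (2 + 2 ^ r)` of the definition of `H_r`. -/
noncomputable def critExp (r : ℝ) : ℝ :=
  2 * r / logb 2 (2 + 2 ^ r)

section CritExp

variable {r : ℝ}

theorem two_rpow_logb_two_add_two_rpow (r : ℝ) : (2 : ℝ) ^ logb 2 (2 + 2 ^ r) = 2 + 2 ^ r :=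
  rpow_logb two_pos (by norm_num) (by positivity)

theorem lt_logb_two_add_two_rpow (r : ℝ) : r < logb 2 (2 + 2 ^ r) := by
  rw [lt_logb_iff_rpow_lt one_lt_two (by positivity)]
  linarith

theorem critExp_pos (hr : 0 < r) : 0 < critExp r := by
  have := hr.trans (lt_logb_two_add_two_rpow r)
  rw [critExp]
  positivity

theorem critExp_lt_two (hr : 0 < r) : critExp r < 2 := by
  rw [critExp, div_lt_iff₀ (hr.trans (lt_logb_two_add_two_rpow r))]
  linarith [lt_logb_two_add_two_rpow r]

theorem four_rpow_div_critExp (hr : r ≠ 0) : (4 : ℝ) ^ (r / critExp r) = 2 + 2 ^ r := by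
  rw [show (4 : ℝ) = 2 ^ (2 : ℝ) by norm_num, ← rpow_mul zero_le_two,
    ← two_rpow_logb_two_add_two_rpow r, critExp]
  field_simp

theorem critExp_le_self (hr : 1 ≤ r) : critExp r ≤ r := by
  have hlog : 2 ≤ logb 2 (2 + 2 ^ r) := by
    rw [le_logb_iff_rpow_le one_lt_two (by positivity), rpow_two]
    linarith [rpow_le_rpow_of_exponent_le one_le_two hr, rpow_one (2 : ℝ)]
  rw [critExp, div_le_iff₀ (by linarith)]
  nlinarith

theorem self_le_critExp (hr0 : 0 < r) (hr1 : r ≤ 1) : r ≤ critExp r := by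
  have hlog : logb 2 (2 + 2 ^ r) ≤ 2 := by
    rw [logb_le_iff_le_rpow one_lt_two (by positivity), rpow_two]
    linarith [rpow_le_rpow_of_exponent_le one_le_two hr1, rpow_one (2 : ℝ)]
  rw [critExp, le_div_iff₀ (hr0.trans (lt_logb_two_add_two_rpow r))]
  nlinarith

theorem coshGap_critExp_zero (hr : r ≠ 0) : coshGap r (critExp r) 0 = 0 := by
  rw [coshGap, coshPotential, coshPotential, mul_zero, cosh_zero, mul_one, rpow_one,
    ← four_rpow_div_critExp hr, log_rpow (by norm_num)]
  norm_num

end CritExp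

theorem coshGap_eq_log_sub_log (r p t : ℝ) :
    coshGap r p t = log (2 + (2 * cosh t) ^ r) - log ((2 + 2 * cosh (p * t)) ^ (r / p)) := by
  rw [coshGap, coshPotential, coshPotential, rpow_one, log_rpow (by positivity)]

theorem two_add_rpow_le_rpow_critExp {r : ℝ} (hr : 1 ≤ r) (t : ℝ) :
    2 + (2 * cosh t) ^ r ≤ (2 + 2 * cosh (critExp r * t)) ^ (r / critExp r) := by
  wlog ht : 0 ≤ t generalizing t
  · simpa using this (-t) (by linarith)
  have hr0 : 0 < r := by linarith
  have hp := critExp_pos hr0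
  have hmono := monotoneOn_gapSignomial hr hp.le (critExp_lt_two hr0).le (critExp_le_self hr)
  have hgap : 1 * coshGap r (critExp r) t ≤ 0 :=
    mul_coshGap_nonpos hr0 hp (coshGap_critExp_zero hr0.ne')
      (fun D hD E hE hDE hnonneg ↦ by linarith [hmono hD hE hDE]) ht
  rw [one_mul, coshGap_eq_log_sub_log, sub_nonpos] at hgap
  exact (log_le_log_iff (by positivity) (by positivity)).1 hgap

theorem rpow_critExp_le_two_add_rpow {r : ℝ} (hr0 : 0 < r) (hr1 : r ≤ 1) (t : ℝ) :
    (2 + 2 * cosh (critExp r * t)) ^ (r / critExp r) ≤ 2 + (2 * cosh t) ^ r := by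
  wlog ht : 0 ≤ t generalizing t
  · simpa using this (-t) (by linarith)
  have hp := critExp_pos hr0
  have hanti := antitoneOn_gapSignomial hr1 hp.le (critExp_lt_two hr0).le (self_le_critExp hr0 hr1)
  have hgap : -1 * coshGap r (critExp r) t ≤ 0 :=
    mul_coshGap_nonpos hr0 hp (coshGap_critExp_zero hr0.ne')
      (fun D hD E hE hDE hnonneg ↦ by linarith [hanti hD hE hDE]) ht
  rw [neg_one_mul, neg_nonpos, coshGap_eq_log_sub_log, sub_nonneg] at hgap
  exact (log_le_log_iff (by positivity) (by positivity)).1 hgap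

section FourPoints

variable {𝕜 E β : Type*} [CommRing 𝕜] [PartialOrder 𝕜] [AddCommGroup E] [Module 𝕜 E]
  [AddCommGroup β] [PartialOrder β] [IsOrderedAddMonoid β] [Module 𝕜 β] {s : Set E} {f : E → β}
  {x y z : E}

theorem map_add_map_le_of_convexOn (hf : ConvexOn 𝕜 s f) (hx : x ∈ s) (hy : y ∈ s)
    (hz : z ∈ segment 𝕜 x y) : f z + f (x + y - z) ≤ f x + f y := by
  obtain ⟨a, b, ha, hb, hab, rfl⟩ := hz
  have hreflect : x + y - (a • x + b • y) = b • x + a • y := by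
    match_scalars <;> linear_combination -hab
  rw [hreflect]
  calc f (a • x + b • y) + f (b • x + a • y)
      ≤ (a • f x + b • f y) + (b • f x + a • f y) :=
        add_le_add (hf.2 hx hy ha hb hab) (hf.2 hx hy hb ha (by rwa [add_comm]))
    _ = f x + f y := by match_scalars <;> linear_combination hab

theorem le_map_add_map_of_concaveOn (hf : ConcaveOn 𝕜 s f) (hx : x ∈ s) (hy : y ∈ s)
    (hz : z ∈ segment 𝕜 x y) : f x + f y ≤ f z + f (x + y - z) :=
  map_add_map_le_of_convexOn hf.dual hx hy hz

end FourPoints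

theorem two_add_two_mul_cosh_mem_segment (a b : ℝ) :
    2 + 2 * cosh b ∈ segment ℝ 4 (2 * cosh a + 2 * cosh b) := by
  rw [segment_eq_Icc] <;> grind [one_le_cosh a, one_le_cosh b]

theorem quadrant_induction {P : ℝ → ℝ → Prop} (symm : ∀ x y, P x y → P y x)
    (axis : ∀ x, 0 ≤ x → P x 0) (interior : ∀ u t, P (exp (u + t)) (exp (u - t))) {x y : ℝ}
    (hx : 0 ≤ x) (hy : 0 ≤ y) : P x y := by
  rcases hy.eq_or_lt with rfl | hy
  · exact axis x hx
  rcases hx.eq_or_lt with rfl | hx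
  · exact symm _ _ (axis y hy.le)
  have := interior ((log x + log y) / 2) ((log x - log y) / 2)
  ring_nf at this
  rwa [exp_log hx, exp_log hy] at this

section Hfun

variable {r : ℝ}

theorem Hfun_comm (r x y : ℝ) : Hfun r x y = Hfun r y x := by
  rw [Hfun, Hfun, add_comm x, mul_comm x, mul_comm (1 + x ^ _)]

theorem Hfun_zero_right (hr : 0 < r) (x : ℝ) :
    Hfun r x 0 = 1 + x ^ r - (1 + x ^ critExp r) ^ (r / critExp r) := by
  rw [Hfun, ← critExp, add_zero, mul_zero, zero_rpow hr.ne', zero_rpow (critExp_pos hr).ne',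
    add_zero, add_zero, mul_one]

theorem one_add_exp_rpow_mul (p u t : ℝ) :
    (1 + exp (u + t) ^ p) * (1 + exp (u - t) ^ p) =
      exp (p * u) * (2 * cosh (p * u) + 2 * cosh (p * t)) := by
  have hadd : exp (u + t) ^ p = exp (p * u) * exp (p * t) := by
    rw [← exp_mul, ← exp_add]
    ring_nf
  have hsub : exp (u - t) ^ p = exp (p * u) * (exp (p * t))⁻¹ := by
    rw [← exp_mul, ← exp_neg, ← exp_add]
    ring_nf
  rw [hadd, hsub, cosh_eq, cosh_eq, exp_neg, exp_neg]
  field_simp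
  ring

theorem Hfun_exp_add_exp_sub (hr : 0 < r) (u t : ℝ) :
    Hfun r (exp (u + t)) (exp (u - t)) = 1 + exp (2 * u) ^ r + exp u ^ r *
      ((2 * cosh t) ^ r -
        (2 * cosh (critExp r * u) + 2 * cosh (critExp r * t)) ^ (r / critExp r)) := by
  have hp := critExp_pos hr
  have hsum : exp (u + t) + exp (u - t) = exp u * (2 * cosh t) := by
    rw [cosh_eq, exp_add, sub_eq_add_neg, exp_add]
    ring
  have hprod : exp (u + t) * exp (u - t) = exp (2 * u) := by
    rw [← exp_add]
    ring_nf
  have hpow : exp (critExp r * u) ^ (r / critExp r) = exp u ^ r := by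
    rw [← exp_mul, ← exp_mul]
    field_simp
  rw [Hfun, ← critExp, hsum, hprod, one_add_exp_rpow_mul,
    mul_rpow (exp_pos u).le (two_mul_cosh_pos t).le,
    mul_rpow (exp_pos (critExp r * u)).le (by positivity), hpow]
  ring

theorem sqrt_exp_add_mul_exp_sub (u t : ℝ) : √(exp (u + t) * exp (u - t)) = exp u := by
  rw [← exp_add, add_add_sub_cancel, exp_add, sqrt_mul_self (exp_pos u).le]

theorem Hfun_exp_add_exp_sub_sub_Hfun_exp (hr : 0 < r) (u t : ℝ) :
    Hfun r (exp (u + t)) (exp (u - t)) - Hfun r (exp u) (exp u) = exp u ^ r *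
      ((2 * cosh t) ^ r - 2 ^ r + (2 + 2 * cosh (critExp r * u)) ^ (r / critExp r) -
        (2 * cosh (critExp r * u) + 2 * cosh (critExp r * t)) ^ (r / critExp r)) := by
  have hdiag := Hfun_exp_add_exp_sub hr u 0
  rw [add_zero, sub_zero, mul_zero, cosh_zero, mul_one,
    add_comm (2 * cosh (critExp r * u)) 2] at hdiag
  rw [Hfun_exp_add_exp_sub hr, hdiag]
  ring

theorem Hfun_zero_right_nonpos (hr : 1 ≤ r) {x : ℝ} (hx : 0 ≤ x) : Hfun r x 0 ≤ 0 := by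
  have hr0 : 0 < r := by linarith
  have hp := critExp_pos hr0
  have := add_rpow_le_rpow_add zero_le_one (rpow_nonneg hx (critExp r))
    ((one_le_div hp).2 (critExp_le_self hr))
  rw [one_rpow, ← rpow_mul hx, mul_div_cancel₀ r hp.ne'] at this
  rwa [Hfun_zero_right hr0, sub_nonpos]

theorem Hfun_zero_right_nonneg (hr0 : 0 < r) (hr1 : r ≤ 1) {x : ℝ} (hx : 0 ≤ x) :
    0 ≤ Hfun r x 0 := by
  have hp := critExp_pos hr0
  have := rpow_add_le_add_rpow zero_le_one (rpow_nonneg hx (critExp r)) (by positivity)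
    ((div_le_one hp).2 (self_le_critExp hr0 hr1))
  rw [one_rpow, ← rpow_mul hx, mul_div_cancel₀ r hp.ne'] at this
  rwa [Hfun_zero_right hr0, sub_nonneg]

theorem Hfun_zero_zero (hr : 0 < r) : Hfun r 0 0 = 0 := by
  rw [Hfun_zero_right hr, zero_rpow hr.ne', zero_rpow (critExp_pos hr).ne', add_zero, one_rpow,
    sub_self]

theorem Hfun_exp_add_exp_sub_le_Hfun_exp (hr : 1 ≤ r) (u t : ℝ) :
    Hfun r (exp (u + t)) (exp (u - t)) ≤ Hfun r (exp u) (exp u) := by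
  have hr0 : 0 < r := by linarith
  have hreflect : 4 + (2 * cosh (critExp r * u) + 2 * cosh (critExp r * t)) -
      (2 + 2 * cosh (critExp r * t)) = 2 + 2 * cosh (critExp r * u) := by ring
  have hfour := map_add_map_le_of_convexOn
    (convexOn_rpow ((one_le_div (critExp_pos hr0)).2 (critExp_le_self hr)))
    (mem_Ici.2 four_pos.le) (mem_Ici.2 (by positivity))
    (two_add_two_mul_cosh_mem_segment (critExp r * u) (critExp r * t))
  have hcosh := two_add_rpow_le_rpow_critExp hr t
  rw [four_rpow_div_critExp hr0.ne', hreflect] at hfour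
  rw [← sub_nonpos, Hfun_exp_add_exp_sub_sub_Hfun_exp hr0]
  exact mul_nonpos_of_nonneg_of_nonpos (by positivity) (by linarith)

theorem Hfun_exp_le_Hfun_exp_add_exp_sub (hr0 : 0 < r) (hr1 : r ≤ 1) (u t : ℝ) :
    Hfun r (exp u) (exp u) ≤ Hfun r (exp (u + t)) (exp (u - t)) := by
  have hp := critExp_pos hr0
  have hreflect : 4 + (2 * cosh (critExp r * u) + 2 * cosh (critExp r * t)) -
      (2 + 2 * cosh (critExp r * t)) = 2 + 2 * cosh (critExp r * u) := by ring
  have hfour := le_map_add_map_of_concaveOn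
    (concaveOn_rpow (by positivity) ((div_le_one hp).2 (self_le_critExp hr0 hr1)))
    (mem_Ici.2 four_pos.le) (mem_Ici.2 (by positivity))
    (two_add_two_mul_cosh_mem_segment (critExp r * u) (critExp r * t))
  have hcosh := rpow_critExp_le_two_add_rpow hr0 hr1 t
  rw [four_rpow_div_critExp hr0.ne', hreflect] at hfour
  rw [← sub_nonneg, Hfun_exp_add_exp_sub_sub_Hfun_exp hr0]
  exact mul_nonneg (by positivity) (by linarith)

theorem Hfun_le_Hfun_sqrt (hr : 1 ≤ r) {x y : ℝ} (hx : 0 ≤ x) (hy : 0 ≤ y) :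
    Hfun r x y ≤ Hfun r √(x * y) √(x * y) := by
  refine quadrant_induction (P := fun x y ↦ Hfun r x y ≤ Hfun r √(x * y) √(x * y))
    (fun x y hxy ↦ ?_) (fun x hx ↦ ?_) (fun u t ↦ ?_) hx hy
  · rwa [Hfun_comm r y x, mul_comm y x]
  · rw [mul_zero, sqrt_zero, Hfun_zero_zero (by linarith)]
    exact Hfun_zero_right_nonpos hr hx
  · rw [sqrt_exp_add_mul_exp_sub]
    exact Hfun_exp_add_exp_sub_le_Hfun_exp hr u t

theorem Hfun_sqrt_le_Hfun (hr0 : 0 < r) (hr1 : r ≤ 1) {x y : ℝ} (hx : 0 ≤ x) (hy : 0 ≤ y) :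
    Hfun r √(x * y) √(x * y) ≤ Hfun r x y := by
  refine quadrant_induction (P := fun x y ↦ Hfun r √(x * y) √(x * y) ≤ Hfun r x y)
    (fun x y hxy ↦ ?_) (fun x hx ↦ ?_) (fun u t ↦ ?_) hx hy
  · rwa [Hfun_comm r y x, mul_comm y x]
  · rw [mul_zero, sqrt_zero, Hfun_zero_zero hr0]
    exact Hfun_zero_right_nonneg hr0 hr1 hx
  · rw [sqrt_exp_add_mul_exp_sub]
    exact Hfun_exp_le_Hfun_exp_add_exp_sub hr0 hr1 u t

end Hfun

theorem reduction_to_diagonal (r : ℝ) (hr0 : 0 < r) (hr1 : r ≠ 1) :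
    (1 < r → ∀ x y : ℝ, 0 ≤ x → 0 ≤ y →
      Hfun r x y ≤ Hfun r (Real.sqrt (x * y)) (Real.sqrt (x * y))) ∧
    (r < 1 → ∀ x y : ℝ, 0 ≤ x → 0 ≤ y →
      Hfun r (Real.sqrt (x * y)) (Real.sqrt (x * y)) ≤ Hfun r x y) :=
  ⟨fun hr _ _ hx hy ↦ Hfun_le_Hfun_sqrt hr.le hx hy,
    fun hr _ _ hx hy ↦ Hfun_sqrt_le_Hfun hr0 hr.le hx hy⟩
end

section
/- Let q := 1 / ((log₂ 3)/2 − 1/4). Then for all real x, y ≥ 0, one has (1 + (x + y)² + (xy)²)² ≤ (1 + x^{4/3})³ (1 + y^q)^{4/q}. -/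
/-!
Write `a = x ^ (1 / 3)`. For fixed `y`, the ratio
`(1 + (a ^ 3 + y) ^ 2 + (a ^ 3 * y) ^ 2) ^ 2 / (1 + a ^ 4) ^ 3` is largest at `a = y`, where it
equals `(1 + y ^ 2 + y ^ 4) ^ 2 / (1 + y ^ 4)`; this is a polynomial inequality. With `t = y ^ 2`
and `p = q / 2` it remains to see that `(1 + t + t ^ 2) ^ 2 ≤ (1 + t ^ 2) * (1 + t ^ p) ^ (2 / p)`,
and the symmetry `t ↦ t⁻¹` allows `t ≤ 1`. The difference of logarithms of the two sides vanishes
at `0` and is nonnegative at `1`, and its derivative changes sign at most once, from positive to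
negative, so it is nonnegative in between. That sign is opposite to the sign of an elementary
function vanishing at `1`, whose own derivative also changes sign at most once, because it is
governed by a rational function of `t + t⁻¹` that decreases as long as it is positive.
-/

open Real Set

theorem min_endpoints_le_of_deriv_single_crossing {f f' : ℝ → ℝ} {a b x : ℝ}
    (hf : ContinuousOn f (Icc a b)) (hf' : ∀ z ∈ Ioo a b, HasDerivAt f (f' z) z)
    (hcross : ∀ z ∈ Ioo a b, ∀ w ∈ Ioo a b, z < w → 0 < f' w → 0 ≤ f' z) (hx : x ∈ Icc a b) :
    min (f a) (f b) ≤ f x := by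
  by_cases hpos : ∃ w ∈ Ioo a b, x ≤ w ∧ 0 < f' w
  · obtain ⟨w, hw, hxw, hw'⟩ := hpos
    have hmono : MonotoneOn f (Icc a x) := by
      refine monotoneOn_of_hasDerivWithinAt_nonneg (f' := f') (convex_Icc a x)
        (hf.mono (Icc_subset_Icc_right hx.2)) ?_ ?_ <;> rw [interior_Icc] <;> intro z hz
      · exact (hf' z ⟨hz.1, hz.2.trans_le hx.2⟩).hasDerivWithinAt
      · exact hcross z ⟨hz.1, hz.2.trans_le hx.2⟩ w hw (hz.2.trans_le hxw) hw'
    exact min_le_of_left_le (hmono (left_mem_Icc.2 hx.1) (right_mem_Icc.2 hx.1) hx.1)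
  · push Not at hpos
    have hanti : AntitoneOn f (Icc x b) := by
      refine antitoneOn_of_hasDerivWithinAt_nonpos (f' := f') (convex_Icc x b)
        (hf.mono (Icc_subset_Icc_left hx.1)) ?_ ?_ <;> rw [interior_Icc] <;> intro z hz
      · exact (hf' z ⟨hx.1.trans_lt hz.1, hz.2⟩).hasDerivWithinAt
      · exact hpos z ⟨hx.1.trans_lt hz.1, hz.2⟩ hz.1.le
    exact min_le_of_right_le (hanti (left_mem_Icc.2 hx.2) (right_mem_Icc.2 hx.2) hx.2)

theorem add_inv_le_add_inv_of_le_of_le_one {t u : ℝ} (ht : 0 < t) (htu : t ≤ u) (hu : u ≤ 1) :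
    u + u⁻¹ ≤ t + t⁻¹ := by
  have hu0 : 0 < u := ht.trans_le htu
  have htu1 : t * u ≤ 1 := mul_le_one₀ (htu.trans hu) hu0.le hu
  have hfactor : t + t⁻¹ - (u + u⁻¹) = (u - t) * (1 - t * u) / (t * u) := by
    field_simp
    ring
  rw [← sub_nonneg, hfactor]
  exact div_nonneg (mul_nonneg (sub_nonneg.2 htu) (sub_nonneg.2 htu1)) (by positivity)

/-- The logarithmic derivative `t * d/dt` of `log ((1 + t ^ 2 + t ^ 3) / (1 + t + t ^ 3))`, as a
function of `s = t + t⁻¹`. -/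
noncomputable def elasticity (s : ℝ) : ℝ :=
  (3 - s) * (1 + s) / (s ^ 3 + s ^ 2 - 2 * s + 1)

theorem elasticity_le_max {s s' : ℝ} (hs : 1 ≤ s) (hss' : s ≤ s') :
    elasticity s' ≤ max 0 (elasticity s) := by
  have hden_pos : 0 < s ^ 3 + s ^ 2 - 2 * s + 1 := by
    nlinarith [mul_nonneg (by linarith : 0 ≤ s) (sq_nonneg (s - 1))]
  have hden_mono : s ^ 3 + s ^ 2 - 2 * s + 1 ≤ s' ^ 3 + s' ^ 2 - 2 * s' + 1 := by
    nlinarith [mul_nonneg (sub_nonneg.2 hss') (by nlinarith : 0 ≤ s' ^ 2 + s' * s + s ^ 2 - 2)]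
  have hnum_anti : (3 - s') * (1 + s') ≤ (3 - s) * (1 + s) := by nlinarith
  rcases le_total 3 s' with h3 | h3
  · refine le_max_of_le_left (div_nonpos_of_nonpos_of_nonneg ?_ (hden_pos.le.trans hden_mono))
    exact mul_nonpos_of_nonpos_of_nonneg (by linarith) (by linarith)
  · have hnum_nonneg : 0 ≤ (3 - s') * (1 + s') := mul_nonneg (by linarith) (by linarith)
    exact le_max_of_le_right
      (div_le_div₀ (hnum_nonneg.trans hnum_anti) hnum_anti hden_pos hden_mono)

theorem elasticity_add_inv {t : ℝ} (ht : 0 < t) :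
    elasticity (t + t⁻¹) =
      t * (3 * t - t ^ 2 - 1) * (1 + t + t ^ 2) / ((1 + t + t ^ 3) * (1 + t ^ 2 + t ^ 3)) := by
  have hden : (t + t⁻¹) ^ 3 + (t + t⁻¹) ^ 2 - 2 * (t + t⁻¹) + 1 =
      (1 + t + t ^ 3) * (1 + t ^ 2 + t ^ 3) / t ^ 3 := by
    field_simp
    ring
  rw [elasticity, hden]
  field_simp
  ring

/-- The logarithm of the quotient of `1 + t + t ^ 3` by `t ^ (p - 1) * (1 + t ^ 2 + t ^ 3)`. Its
sign is opposite to that of the derivative of `logGap p`. -/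
noncomputable def slopeGap (p t : ℝ) : ℝ :=
  log (1 + t + t ^ 3) - log (1 + t ^ 2 + t ^ 3) - (p - 1) * log t

theorem slopeGap_neg_iff {p t : ℝ} (ht : 0 < t) :
    slopeGap p t < 0 ↔ 1 + t + t ^ 3 < t ^ (p - 1) * (1 + t ^ 2 + t ^ 3) := by
  rw [slopeGap, ← log_lt_log_iff (by positivity : 0 < 1 + t + t ^ 3) (by positivity),
    log_mul (by positivity) (by positivity), log_rpow ht]
  constructor <;> intro h <;> linarith

theorem hasDerivAt_slopeGap {p t : ℝ} (ht : 0 < t) :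
    HasDerivAt (slopeGap p) ((1 - p - elasticity (t + t⁻¹)) / t) t := by
  have hnum : HasDerivAt (fun t : ℝ ↦ 1 + t + t ^ 3) (1 + 3 * t ^ 2) t := by
    simpa using ((hasDerivAt_id t).const_add 1).fun_add (hasDerivAt_pow 3 t)
  have hden : HasDerivAt (fun t : ℝ ↦ 1 + t ^ 2 + t ^ 3) (2 * t + 3 * t ^ 2) t := by
    simpa using ((hasDerivAt_pow 2 t).const_add 1).fun_add (hasDerivAt_pow 3 t)
  refine (((hnum.log (by positivity)).sub (hden.log (by positivity))).sub
    ((hasDerivAt_log ht.ne').const_mul (p - 1))).congr_deriv ?_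
  rw [elasticity_add_inv ht]
  field_simp
  ring

theorem slopeGap_neg_of_le {p t u : ℝ} (hp : p ≤ 1) (ht : 0 < t) (htu : t ≤ u) (hu : u ≤ 1)
    (hneg : slopeGap p u < 0) : slopeGap p t < 0 := by
  have hmin : min (slopeGap p t) (slopeGap p 1) ≤ slopeGap p u := by
    refine min_endpoints_le_of_deriv_single_crossing
      (fun z hz ↦ (hasDerivAt_slopeGap (ht.trans_le hz.1)).continuousAt.continuousWithinAt)
      (fun z hz ↦ hasDerivAt_slopeGap (ht.trans hz.1)) ?_ ⟨htu, hu⟩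
    intro z hz w hw hzw hpos
    have hz0 : 0 < z := ht.trans hz.1
    have hw0 : 0 < w := ht.trans hw.1
    have hone_le : 1 ≤ w + w⁻¹ := by linarith [(one_le_inv₀ hw0).2 hw.2.le]
    have hadd_inv : w + w⁻¹ ≤ z + z⁻¹ :=
      add_inv_le_add_inv_of_le_of_le_one hz0 hzw.le hw.2.le
    have hw_lt : elasticity (w + w⁻¹) < 1 - p := by
      linarith [(div_pos_iff_of_pos_right hw0).1 hpos]
    have hz_le : elasticity (z + z⁻¹) ≤ 1 - p :=
      (elasticity_le_max hone_le hadd_inv).trans (max_le (by linarith) hw_lt.le)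
    exact div_nonneg (by linarith) hz0.le
  have hone : slopeGap p 1 = 0 := by norm_num [slopeGap]
  rw [hone] at hmin
  exact (min_lt_iff.1 (hmin.trans_lt hneg)).resolve_right (lt_irrefl 0)

/-- The logarithm of the quotient of `(1 + t ^ 2) * (1 + t ^ p) ^ (2 / p)` by
`(1 + t + t ^ 2) ^ 2`. -/
noncomputable def logGap (p t : ℝ) : ℝ :=
  log (1 + t ^ 2) + 2 / p * log (1 + t ^ p) - 2 * log (1 + t + t ^ 2)

theorem hasDerivAt_logGap {p t : ℝ} (hp : p ≠ 0) (ht : 0 < t) :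
    HasDerivAt (logGap p)
      (2 / ((1 + t ^ p) * (1 + t ^ 2) * (1 + t + t ^ 2)) *
        (t ^ (p - 1) * (1 + t ^ 2 + t ^ 3) - (1 + t + t ^ 3))) t := by
  have hsq : HasDerivAt (fun t : ℝ ↦ 1 + t ^ 2) (2 * t) t := by
    simpa using (hasDerivAt_pow 2 t).const_add 1
  have hrpow : HasDerivAt (fun t : ℝ ↦ 1 + t ^ p) (p * t ^ (p - 1)) t :=
    (hasDerivAt_rpow_const (Or.inl ht.ne')).const_add 1
  have hquad : HasDerivAt (fun t : ℝ ↦ 1 + t + t ^ 2) (1 + 2 * t) t := by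
    simpa using ((hasDerivAt_id t).const_add 1).fun_add (hasDerivAt_pow 2 t)
  refine (((hsq.log (by positivity)).add
    ((hrpow.log (by positivity)).const_mul (2 / p))).sub
    ((hquad.log (by positivity)).const_mul 2)).congr_deriv ?_
  have hsplit : t ^ p = t ^ (p - 1) * t := by rw [← rpow_add_one ht.ne', sub_add_cancel]
  rw [hsplit]
  field_simp
  ring

theorem continuousOn_logGap {p : ℝ} (hp : 0 ≤ p) : ContinuousOn (logGap p) (Ici 0) := by
  intro t ht
  have ht0 : 0 ≤ t := ht
  have hrpow : ContinuousAt (fun t : ℝ ↦ 1 + t ^ p) t :=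
    continuousAt_const.add (continuousAt_rpow_const t p (Or.inr hp))
  refine ContinuousAt.continuousWithinAt (ContinuousAt.sub (ContinuousAt.add ?_ ?_) ?_)
  · exact ContinuousAt.log (by fun_prop) (by positivity)
  · exact (hrpow.log (by positivity)).const_mul _
  · exact (ContinuousAt.log (by fun_prop) (by positivity)).const_mul _

theorem le_one_of_nine_halves_le_two_rpow {p : ℝ} (hsharp : 9 / 2 ≤ (2 : ℝ) ^ (2 / p)) :
    p ≤ 1 := by
  by_contra! hp1
  have hle : (2 : ℝ) ^ (2 / p) ≤ 2 ^ (2 : ℝ) :=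
    rpow_le_rpow_of_exponent_le one_le_two (div_le_self zero_le_two hp1.le)
  rw [rpow_two] at hle
  linarith

theorem logGap_nonneg {p t : ℝ} (hp : 0 < p) (hsharp : 9 / 2 ≤ (2 : ℝ) ^ (2 / p))
    (ht : t ∈ Icc 0 1) : 0 ≤ logGap p t := by
  have hzero : logGap p 0 = 0 := by simp [logGap, hp.ne']
  have hone : 0 ≤ logGap p 1 := by
    have hlog : log (9 / 2) ≤ 2 / p * log 2 := by
      rw [← log_rpow two_pos]
      exact log_le_log (by norm_num) hsharp
    have hnine : log (9 / 2) = 2 * log 3 - log 2 := by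
      rw [log_div (by norm_num) (by norm_num), show (9 : ℝ) = 3 ^ 2 by norm_num, log_pow,
        Nat.cast_two]
    simp only [logGap, one_pow, one_rpow, one_add_one_eq_two, two_add_one_eq_three]
    linarith
  refine (le_min hzero.ge hone).trans (min_endpoints_le_of_deriv_single_crossing
    ((continuousOn_logGap hp.le).mono Icc_subset_Ici_self)
    (fun z hz ↦ hasDerivAt_logGap hp.ne' hz.1) ?_ ht)
  intro z hz w hw hzw hpos
  have hw0 : 0 < w := hw.1
  have hz0 : 0 < z := hz.1
  have hw_neg : slopeGap p w < 0 :=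
    (slopeGap_neg_iff hw0).2 (sub_pos.1 (pos_of_mul_pos_right hpos (by positivity)))
  have hz_neg : slopeGap p z < 0 :=
    slopeGap_neg_of_le (le_one_of_nine_halves_le_two_rpow hsharp) hz0 hzw.le hw.2.le hw_neg
  exact mul_nonneg (by positivity) (sub_nonneg.2 ((slopeGap_neg_iff hz0).1 hz_neg).le)

theorem sq_one_add_add_sq_le_of_le_one {p t : ℝ} (hp : 0 < p) (hsharp : 9 / 2 ≤ (2 : ℝ) ^ (2 / p))
    (ht : 0 ≤ t) (ht1 : t ≤ 1) : (1 + t + t ^ 2) ^ 2 ≤ (1 + t ^ 2) * (1 + t ^ p) ^ (2 / p) := by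
  rw [← log_le_log_iff (by positivity) (by positivity), log_mul (by positivity) (by positivity),
    log_rpow (by positivity), log_pow]
  exact sub_nonneg.1 (logGap_nonneg hp hsharp ⟨ht, ht1⟩)

theorem sq_one_add_add_sq_le {p t : ℝ} (hp : 0 < p) (hsharp : 9 / 2 ≤ (2 : ℝ) ^ (2 / p))
    (ht : 0 ≤ t) : (1 + t + t ^ 2) ^ 2 ≤ (1 + t ^ 2) * (1 + t ^ p) ^ (2 / p) := by
  rcases le_total t 1 with ht1 | ht1
  · exact sq_one_add_add_sq_le_of_le_one hp hsharp ht ht1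
  have ht0 : 0 < t := one_pos.trans_le ht1
  have hscale : (1 + t ^ p) ^ (2 / p) = t ^ 2 * (1 + t⁻¹ ^ p) ^ (2 / p) := by
    have hpow : t ^ 2 = (t ^ p) ^ (2 / p) := by
      rw [← rpow_mul ht, mul_div_cancel₀ _ hp.ne', rpow_two]
    rw [hpow, ← mul_rpow (by positivity) (by positivity), inv_rpow ht, mul_add, mul_one,
      mul_inv_cancel₀ (by positivity), add_comm]
  calc (1 + t + t ^ 2) ^ 2 = t ^ 4 * (1 + t⁻¹ + t⁻¹ ^ 2) ^ 2 := by
        field_simp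
        ring
    _ ≤ t ^ 4 * ((1 + t⁻¹ ^ 2) * (1 + t⁻¹ ^ p) ^ (2 / p)) := by
        gcongr
        exact sq_one_add_add_sq_le_of_le_one hp hsharp (inv_pos.2 ht0).le
          (inv_le_one_of_one_le₀ ht1)
    _ = (1 + t ^ 2) * (1 + t ^ p) ^ (2 / p) := by
        rw [hscale]
        field_simp
        ring

theorem sq_one_add_cube_add_sq_mul_le {a y : ℝ} (hay : 0 ≤ a * y) :
    (1 + (a ^ 3 + y) ^ 2 + (a ^ 3 * y) ^ 2) ^ 2 * (1 + y ^ 4) ≤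
      (1 + a ^ 4) ^ 3 * (1 + y ^ 2 + y ^ 4) ^ 2 := by
  -- Equality holds at `a = y` and `a = y⁻¹`, whence the double factors.
  have hfactor : (1 + a ^ 4) ^ 3 * (1 + y ^ 2 + y ^ 4) ^ 2 -
      (1 + (a ^ 3 + y) ^ 2 + (a ^ 3 * y) ^ 2) ^ 2 * (1 + y ^ 4) =
      (a - y) ^ 2 * (1 - a * y) ^ 2 *
        (a ^ 2 * (2 * (1 - a ^ 2) ^ 2 + (1 + a ^ 2) ^ 2) * (1 + y ^ 2) ^ 2 +
          2 * (a * y) * (1 + a ^ 2) * (1 + a ^ 4) * (1 + y ^ 2) +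
          ((1 - a ^ 2 + a ^ 4) ^ 2 + 3 * a ^ 4) * y ^ 2) := by
    ring
  rw [← sub_nonneg, hfactor]
  positivity

theorem numerical_r_two_endpoint_general {x y q : ℝ} (hx : 0 ≤ x) (hy : 0 ≤ y) (hq : 0 < q)
    (hsharp : 9 / 2 ≤ (2 : ℝ) ^ (4 / q)) :
    (1 + (x + y) ^ 2 + (x * y) ^ 2) ^ 2 ≤
      (1 + x ^ ((4 : ℝ) / 3)) ^ 3 * (1 + y ^ q) ^ (4 / q) := by
  obtain ⟨a, ha, rfl⟩ : ∃ a : ℝ, 0 ≤ a ∧ a ^ 3 = x :=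
    ⟨x ^ ((3 : ℕ) : ℝ)⁻¹, by positivity, rpow_inv_natCast_pow hx three_ne_zero⟩
  have hpow : (a ^ 3) ^ ((4 : ℝ) / 3) = a ^ 4 := by
    rw [← rpow_natCast_mul ha, ← rpow_natCast]
    norm_num
  have hexp : 2 / (q / 2) = 4 / q := by
    field_simp
    norm_num
  have hone_var : (1 + y ^ 2 + y ^ 4) ^ 2 ≤ (1 + y ^ 4) * (1 + y ^ q) ^ (4 / q) := by
    have h := sq_one_add_add_sq_le (half_pos hq) (hexp.symm ▸ hsharp) (sq_nonneg y)
    rwa [← rpow_natCast_mul hy, Nat.cast_two, mul_div_cancel₀ q two_ne_zero, hexp, ← pow_mul]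
      at h
  rw [hpow]
  refine le_of_mul_le_mul_right ?_ (by positivity : 0 < 1 + y ^ 4)
  calc (1 + (a ^ 3 + y) ^ 2 + (a ^ 3 * y) ^ 2) ^ 2 * (1 + y ^ 4)
      ≤ (1 + a ^ 4) ^ 3 * (1 + y ^ 2 + y ^ 4) ^ 2 :=
        sq_one_add_cube_add_sq_mul_le (mul_nonneg ha hy)
    _ ≤ (1 + a ^ 4) ^ 3 * ((1 + y ^ 4) * (1 + y ^ q) ^ (4 / q)) := by gcongr
    _ = (1 + a ^ 4) ^ 3 * (1 + y ^ q) ^ (4 / q) * (1 + y ^ 4) := by ring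

theorem endpoint_exponent_pos : 0 < 1 / (logb 2 3 / 2 - 1 / 4) := by
  have : 1 < logb 2 3 := by
    rw [lt_logb_iff_rpow_lt one_lt_two three_pos]
    norm_num
  exact one_div_pos.2 (by linarith)

theorem two_rpow_four_div_endpoint_exponent :
    (2 : ℝ) ^ (4 / (1 / (logb 2 3 / 2 - 1 / 4))) = 9 / 2 := by
  rw [div_div_eq_mul_div, div_one, show 4 * (logb 2 3 / 2 - 1 / 4) = logb 2 3 * 2 - 1 by ring,
    rpow_sub two_pos, rpow_mul zero_le_two, rpow_logb two_pos (by norm_num) three_pos]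
  norm_num

theorem numerical_r_two_endpoint (x y : ℝ) (hx : 0 ≤ x) (hy : 0 ≤ y) :
    (1 + (x + y) ^ 2 + (x * y) ^ 2) ^ 2 ≤
      (1 + x ^ ((4 : ℝ) / 3)) ^ 3 *
        (1 + y ^ (1 / (Real.logb 2 3 / 2 - 1 / 4))) ^
          ((4 : ℝ) / (1 / (Real.logb 2 3 / 2 - 1 / 4))) :=
  numerical_r_two_endpoint_general hx hy endpoint_exponent_pos
    two_rpow_four_div_endpoint_exponent.ge
end
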